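/- arXiv:math/0405211 — 3 statements merged into one kernel-verified Lean document; each statement's English description precedes it below -/
import Mathlib

section
/- Let G₁ and G₂ be countable groups, let G₁ * G₂ denote their free product, and let π : G₁ * G₂ → G₁ × G₂ be the canonical surjective homomorphism. Then the kernel of π is a countable free group. -/
open Monoid

namespace KerToProd

section
universe u v
variable (A : Type u) (B : Type v) [Group A] [Group B]

/-- Index set of the free basis. -/
abbrev X := {p : A × B // p.1 ≠ 1 ∧ p.2 ≠ 1}

variable {A B}

open Classical in
/-- The formal commutator. -/
noncomputable def c (a : A) (b : B) : FreeGroup (X A B) :=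
  if h : a ≠ 1 ∧ b ≠ 1 then FreeGroup.of ⟨(a, b), h⟩ else 1

@[simp] lemma c_one_left (b : B) : c (1 : A) b = 1 := by simp [c]
@[simp] lemma c_one_right (a : A) : c a (1 : B) = 1 := by simp [c]
lemma c_of (p : X A B) : c p.1.1 p.1.2 = FreeGroup.of p := by
  unfold c; rw [dif_pos p.2]

/-- The realization of formal words. -/
def phi : FreeGroup (X A B) →* Coprod A B :=
  FreeGroup.lift fun p => Coprod.inl p.1.1 * Coprod.inr p.1.2 *
    (Coprod.inl p.1.1)⁻¹ * (Coprod.inr p.1.2)⁻¹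

lemma phi_c (a : A) (b : B) : phi (c a b) = Coprod.inl a * Coprod.inr b *
    (Coprod.inl a)⁻¹ * (Coprod.inr b)⁻¹ := by
  by_cases h : a ≠ 1 ∧ b ≠ 1
  · rw [show c a b = FreeGroup.of ⟨(a, b), h⟩ from c_of ⟨(a, b), h⟩]
    simp [phi]
  · have h' : a = 1 ∨ b = 1 := by tauto
    rcases h' with rfl | rfl <;> simp

/-- Action of the first factor. -/
noncomputable def r1 : A →* Equiv.Perm (FreeGroup (X A B) × A × B) :=
  MonoidHom.mk' (fun a =>
    { toFun := fun s => (s.1 * c s.2.1 s.2.2 * (c (s.2.1 * a⁻¹) s.2.2)⁻¹, s.2.1 * a⁻¹, s.2.2)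
      invFun := fun s => (s.1 * c s.2.1 s.2.2 * (c (s.2.1 * a) s.2.2)⁻¹, s.2.1 * a, s.2.2)
      left_inv := fun s => by simp
      right_inv := fun s => by simp })
    (fun a b => by ext s <;> simp [mul_assoc])

/-- Action of the second factor. -/
def r2 : B →* Equiv.Perm (FreeGroup (X A B) × A × B) :=
  MonoidHom.mk' (fun b =>
    { toFun := fun s => (s.1, s.2.1, s.2.2 * b⁻¹)
      invFun := fun s => (s.1, s.2.1, s.2.2 * b)
      left_inv := fun s => by simp
      right_inv := fun s => by simp })
    (fun a b => by ext s <;> simp [mul_assoc])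

/-- Action of the free product. -/
noncomputable def rho : Coprod A B →* Equiv.Perm (FreeGroup (X A B) × A × B) :=
  Coprod.lift r1 r2

lemma rho_inl (a : A) (s : FreeGroup (X A B) × A × B) : rho (Coprod.inl a) s =
    (s.1 * c s.2.1 s.2.2 * (c (s.2.1 * a⁻¹) s.2.2)⁻¹, s.2.1 * a⁻¹, s.2.2) := rfl
lemma rho_inr (b : B) (s : FreeGroup (X A B) × A × B) : rho (Coprod.inr b) s =
    (s.1, s.2.1, s.2.2 * b⁻¹) := rfl

/-- Realization of normal forms. -/
def Phi (s : FreeGroup (X A B) × A × B) : Coprod A B :=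
  phi s.1 * Coprod.inl s.2.1 * Coprod.inr s.2.2

lemma Phi_rho (x : Coprod A B) : ∀ s, Phi (rho x s) = Phi s * x⁻¹ := by
  induction x using Coprod.induction_on with
  | inl a => intro s; rw [rho_inl]; simp [Phi, phi_c, mul_assoc]
  | inr b => intro s; rw [rho_inr]; simp [Phi, mul_assoc]
  | mul x y hx hy => intro s; rw [map_mul, Equiv.Perm.mul_apply, hx, hy, mul_inv_rev, mul_assoc]

lemma rho_phi (w : FreeGroup (X A B)) : ∀ v, rho (phi w) (v, 1, 1) = (v * w⁻¹, 1, 1) := by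
  have inv : ∀ w : FreeGroup (X A B), (∀ v, rho (phi w) (v, 1, 1) = (v * w⁻¹, 1, 1)) →
      ∀ v, rho (phi w⁻¹) (v, 1, 1) = (v * w⁻¹⁻¹, 1, 1) := by
    intro w h v
    rw [map_inv, map_inv, Equiv.Perm.inv_eq_iff_eq, h]
    simp
  induction w using FreeGroup.induction_on with
  | C1 => simp
  | of p =>
    intro v
    have : phi (FreeGroup.of p) = Coprod.inl p.1.1 * Coprod.inr p.1.2 *
      Coprod.inl (p.1.1)⁻¹ * Coprod.inr (p.1.2)⁻¹ := by simp [phi]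
    rw [this]
    simp only [map_mul, Equiv.Perm.mul_apply, rho_inr, rho_inl]
    simp [c_of]
  | inv_of p h => exact inv _ h
  | mul x y hx hy => intro v; rw [map_mul, map_mul, Equiv.Perm.mul_apply, hy, hx]; simp [mul_assoc]

lemma phi_injective : Function.Injective (phi : FreeGroup (X A B) →* Coprod A B) := by
  intro w w' h
  have h1 := rho_phi w 1
  rw [h, rho_phi w' 1] at h1
  simpa using h1.symm

lemma toProd_phi (w : FreeGroup (X A B)) : Coprod.toProd (phi w) = 1 := by
  have : (Coprod.toProd.comp phi : FreeGroup (X A B) →* A × B) = 1 := by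
    ext p <;> simp [phi]
  exact DFunLike.congr_fun this w

lemma range_phi : (phi : FreeGroup (X A B) →* Coprod A B).range =
    (Coprod.toProd : Coprod A B →* A × B).ker := by
  ext x
  constructor
  · rintro ⟨w, rfl⟩; exact toProd_phi w
  · intro hx
    rw [MonoidHom.mem_ker] at hx
    have h := Phi_rho x⁻¹ (1, 1, 1)
    generalize rho x⁻¹ (1, 1, 1) = s at h
    obtain ⟨w, a, b⟩ := s
    have h2 : phi w * Coprod.inl a * Coprod.inr b = x := by simpa [Phi] using h
    have h3 := hx
    rw [← h2, map_mul, map_mul, toProd_phi] at h3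
    simp at h3
    obtain ⟨rfl, rfl⟩ := h3
    exact ⟨w, by simpa using h2⟩

lemma isFree : IsFreeGroup (Coprod.toProd : Coprod A B →* A × B).ker :=
  IsFreeGroup.ofMulEquiv
    ((MonoidHom.ofInjective phi_injective).trans (MulEquiv.subgroupCongr range_phi))

end

end KerToProd

/-- For countable groups `G₁`, `G₂`, the kernel of the canonical
surjective homomorphism `π : G₁ * G₂ → G₁ × G₂` from the free product (coproduct)
to the direct product is a countable free group. -/
theorem kernel_toProd_countable_free (G₁ G₂ : Type*) [Group G₁] [Group G₂]
    [Countable G₁] [Countable G₂] :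
    Countable ↥(Coprod.toProd : Coprod G₁ G₂ →* G₁ × G₂).ker ∧
      IsFreeGroup ↥(Coprod.toProd : Coprod G₁ G₂ →* G₁ × G₂).ker := by
  refine ⟨?_, KerToProd.isFree⟩
  have h1 : Countable (FreeMonoid (G₁ ⊕ G₂)) :=
    inferInstanceAs (Countable (List (G₁ ⊕ G₂)))
  have h2 : Countable (Coprod G₁ G₂) := Coprod.mk_surjective.countable
  infer_instance
end

section
/- Let G₁ and G₂ be countable groups, π : G₁ * G₂ → G₁ × G₂ the canonical surjective homomorphism, and C an infinite cyclic subgroup of G₁ × G₂. Then the preimage π⁻¹(C) is a countable free group. -/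
open Monoid

namespace PreimageFree

universe u v w x

/-- `X`-valued cocycles for an action given by permutations. -/
def IsCoc {K : Type v} [Group K] {A : Type u} (ρ : K →* Equiv.Perm A) {X : Type w} [Group X]
    (c : K → A → X) : Prop :=
  ∀ g h a, c (g * h) a = c g (ρ h a) * c h a

/-- The action groupoid of `ρ` is freely generated by the arrows `γ e` starting at `s e`. -/
def FreeData {K : Type v} [Group K] {A : Type u} (ρ : K →* Equiv.Perm A) {E : Type x}
    (γ : E → K) (s : E → A) : Prop :=
  ∀ (X : Type w) [Group X] (f : E → X), ∃! c : K → A → X, IsCoc ρ c ∧ ∀ e, c (γ e) (s e) = f e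

lemma IsCoc.one {K : Type v} [Group K] {A : Type u} {ρ : K →* Equiv.Perm A} {X : Type w} [Group X]
    {c : K → A → X} (hc : IsCoc ρ c) (a : A) : c 1 a = 1 := by
  have := hc 1 1 a
  simpa using this

/-- The stabilizer subgroup. -/
def stab {K : Type v} [Group K] {A : Type u} (ρ : K →* Equiv.Perm A) (a : A) : Subgroup K where
  carrier := {g | ρ g a = a}
  one_mem' := by simp
  mul_mem' := by
    intro g h hg hh
    simp only [Set.mem_ofPred_eq] at *
    simp [hh, hg]
  inv_mem' := by
    intro g hg
    simp only [Set.mem_ofPred_eq] at *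
    rw [map_inv, Equiv.Perm.inv_eq_iff_eq, hg]

lemma mem_stab {K : Type v} [Group K] {A : Type u} (ρ : K →* Equiv.Perm A) (a : A) (g : K) :
    g ∈ stab ρ a ↔ ρ g a = a := Iff.rfl

lemma exists_reps {K : Type v} [Group K] {A : Type u} (ρ : K →* Equiv.Perm A) :
    ∃ (r : A → A) (t : A → K), (∀ g a, r (ρ g a) = r a) ∧ (∀ a, ρ (t a) (r a) = a) ∧
      (∀ a, r (r a) = r a) ∧ ∀ a, r a = a → t a = 1 := by
  classical
  let S : Setoid A :=
    { r := fun a b => ∃ g, ρ g a = b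
      iseqv :=
        ⟨fun a => ⟨1, by simp⟩, fun {a b} ⟨g, hg⟩ => ⟨g⁻¹, by simp [← hg]⟩,
          fun {a b c} ⟨g, hg⟩ ⟨h, hh⟩ => ⟨h * g, by simp [hg, hh]⟩⟩ }
  let r : A → A := fun a => (Quotient.mk S a).out
  have hr : ∀ a, ∃ g, ρ g (r a) = a := fun a => Quotient.exact (Quotient.out_eq (Quotient.mk S a))
  have hrr : ∀ g a, r (ρ g a) = r a := by
    intro g a
    have : Quotient.mk S (ρ g a) = Quotient.mk S a := Quotient.sound (S.symm ⟨g, rfl⟩)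
    simp only [r, this]
  choose t ht using hr
  refine ⟨r, fun a => if r a = a then 1 else t a, hrr, ?_, ?_, ?_⟩
  · intro a
    by_cases h : r a = a
    · simp [h]
    · simp [h, ht]
  · intro a
    have := hrr (t a) (r a)
    rw [ht] at this
    exact this.symm
  · intro a h
    simp [h]

lemma freeData_of_stab {K : Type v} [Group K] {A : Type u} (ρ : K →* Equiv.Perm A)
    (hfree : ∀ a, IsFreeGroup (stab ρ a)) :
    ∃ (E : Type (max u v)) (γ : E → K) (s : E → A), FreeData.{u, v, w} ρ γ s := by
  classical
  obtain ⟨r, t, hr, ht, hrr, ht1⟩ := exists_reps ρ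
  refine ⟨{a : A // r a ≠ a} ⊕ (Σ o : {a : A // r a = a}, IsFreeGroup.Generators (stab ρ o.1)),
    Sum.elim (fun a => t a.1) (fun p => ((IsFreeGroup.of p.2 : stab ρ p.1.1) : K)),
    Sum.elim (fun a => r a.1) (fun p => p.1.1), ?_⟩
  intro X _ f
  have hk : ∀ g a, (t (ρ g a))⁻¹ * g * t a ∈ stab ρ (r a) := by
    intro g a
    rw [mem_stab, map_mul, map_mul, Equiv.Perm.mul_apply, Equiv.Perm.mul_apply, ht, map_inv,
      Equiv.Perm.inv_eq_iff_eq]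
    conv_rhs => rw [← hr g a]
    exact (ht _).symm
  let τ : A → X := fun a => if h : r a ≠ a then f (.inl ⟨a, h⟩) else 1
  let φ : ∀ o : {a : A // r a = a}, stab ρ o.1 →* X := fun o =>
    IsFreeGroup.lift (fun e => f (.inr ⟨o, e⟩))
  let Φ : A → K → X := fun a g =>
    if h : r a = a ∧ g ∈ stab ρ a then φ ⟨a, h.1⟩ ⟨g, h.2⟩ else 1
  have hΦ : ∀ a, r a = a → ∀ g ∈ stab ρ a, ∀ h ∈ stab ρ a, Φ a (g * h) = Φ a g * Φ a h := by
    intro a ha g hg h hh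
    simp only [Φ]
    rw [dif_pos ⟨ha, mul_mem hg hh⟩, dif_pos ⟨ha, hg⟩, dif_pos ⟨ha, hh⟩, ← map_mul]
    rfl
  have hτr : ∀ a, r a = a → τ a = 1 := fun a ha => by simp [τ, ha]
  refine ⟨fun g a => τ (ρ g a) * Φ (r a) ((t (ρ g a))⁻¹ * g * t a) * (τ a)⁻¹, ⟨?_, ?_⟩, ?_⟩
  · intro g h a
    have e : (t (ρ (g * h) a))⁻¹ * (g * h) * t a =
        ((t (ρ g (ρ h a)))⁻¹ * g * t (ρ h a)) * ((t (ρ h a))⁻¹ * h * t a) := by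
      simp only [map_mul, Equiv.Perm.mul_apply]; group
    have h1 := hk g (ρ h a)
    rw [hr] at h1
    simp only [e]
    rw [hΦ _ (hrr a) _ h1 _ (hk h a), hr h a]
    simp only [map_mul, Equiv.Perm.mul_apply]; group
  · rintro (⟨a, ha⟩ | ⟨⟨o, ho⟩, e⟩)
    · have h1 : Φ (r a) 1 = 1 := by
        simp only [Φ]
        rw [dif_pos ⟨hrr a, one_mem _⟩]
        exact map_one _
      simp only [Sum.elim_inl, ht, hrr, ht1 (r a) (hrr a), hτr (r a) (hrr a)]
      simp [h1, τ, ha]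
    · have hs : ρ ((IsFreeGroup.of e : stab ρ o) : K) o = o := (IsFreeGroup.of e : stab ρ o).2
      simp only [Sum.elim_inr, hs, ho, ht1 o ho, hτr o ho]
      simp only [inv_one, one_mul, mul_one, Φ]
      rw [dif_pos ⟨ho, (IsFreeGroup.of e : stab ρ o).2⟩]
      exact IsFreeGroup.lift_of _ _
  · rintro c ⟨hc, hcf⟩
    have hcτ : ∀ a, c (t a) (r a) = τ a := by
      intro a
      by_cases h : r a = a
      · rw [hτr a h, ht1 a h, hc.one]
      · simp only [τ]
        rw [dif_pos h]
        exact hcf (.inl ⟨a, h⟩)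
    have hcΦ : ∀ a, r a = a → ∀ g ∈ stab ρ a, c g a = Φ a g := by
      intro a ha g hg
      let ψ : stab ρ a →* X :=
        { toFun := fun g => c g a
          map_one' := hc.one a
          map_mul' := fun g h => by
            have h2 : ρ (h : K) a = a := h.2
            simp only [Subgroup.coe_mul]
            rw [hc, h2] }
      have : ψ = φ ⟨a, ha⟩ := by
        apply IsFreeGroup.ext_hom
        intro e
        simp only [φ, IsFreeGroup.lift_of]
        exact hcf (.inr ⟨⟨a, ha⟩, e⟩)
      simp only [Φ]
      rw [dif_pos ⟨ha, hg⟩, ← this]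
      rfl
    funext g a
    have e1 := hc g (t a) (r a)
    have e2 := hc (t (ρ g a)) ((t (ρ g a))⁻¹ * g * t a) (r a)
    rw [(mem_stab _ _ _).1 (hk g a), hcΦ _ (hrr a) _ (hk g a)] at e2
    have e3 := hcτ (ρ g a)
    rw [hr] at e3
    rw [e3] at e2
    rw [ht, hcτ] at e1
    have e4 : t (ρ g a) * ((t (ρ g a))⁻¹ * g * t a) = g * t a := by group
    rw [e4, e1] at e2
    rw [← e2]; group

/-- The permutation representation on `A × X` attached to a cocycle. -/
def permOf {K : Type v} [Group K] {A : Type u} (ρ : K →* Equiv.Perm A) {X : Type w} [Group X]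
    (c : K → A → X) (hc : IsCoc ρ c) : K →* Equiv.Perm (A × X) :=
  MonoidHom.toHomPerm
    { toFun := fun g p => (ρ g p.1, c g p.1 * p.2)
      map_one' := by
        funext p
        simp [hc.one, Function.End.one_def]
      map_mul' := fun g h => by
        funext p
        simp only [hc g h, mul_assoc, map_mul, Equiv.Perm.mul_apply]
        rfl }

lemma permOf_apply {K : Type v} [Group K] {A : Type u} (ρ : K →* Equiv.Perm A) {X : Type w}
    [Group X] (c : K → A → X) (hc : IsCoc ρ c) (g : K) (p : A × X) :
    permOf ρ c hc g p = (ρ g p.1, c g p.1 * p.2) := rfl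

lemma freeData_coprod {K₁ : Type*} {K₂ : Type*} [Group K₁] [Group K₂] {A : Type u}
    (ρ : Coprod K₁ K₂ →* Equiv.Perm A) {E₁ : Type*} {E₂ : Type*}
    (γ₁ : E₁ → K₁) (s₁ : E₁ → A) (γ₂ : E₂ → K₂) (s₂ : E₂ → A)
    (h₁ : FreeData.{u, _, w} (ρ.comp Coprod.inl) γ₁ s₁)
    (h₂ : FreeData.{u, _, w} (ρ.comp Coprod.inr) γ₂ s₂) :
    FreeData.{u, _, w} ρ (Sum.elim (fun e => Coprod.inl (γ₁ e)) (fun e => Coprod.inr (γ₂ e)))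
      (Sum.elim s₁ s₂) := by
  intro X _ f
  obtain ⟨c₁, ⟨hc₁, hf₁⟩, hu₁⟩ := h₁ X (fun e => f (.inl e))
  obtain ⟨c₂, ⟨hc₂, hf₂⟩, hu₂⟩ := h₂ X (fun e => f (.inr e))
  let P : Coprod K₁ K₂ →* Equiv.Perm (A × X) := Coprod.lift (permOf _ c₁ hc₁) (permOf _ c₂ hc₂)
  have hP1 : ∀ g p, P (Coprod.inl g) p = (ρ (Coprod.inl g) p.1, c₁ g p.1 * p.2) := fun g p => by
    simp [P, permOf_apply]
  have hP2 : ∀ g p, P (Coprod.inr g) p = (ρ (Coprod.inr g) p.1, c₂ g p.1 * p.2) := fun g p => by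
    simp [P, permOf_apply]
  have hP : ∀ g a y, P g (a, y) = (ρ g a, (P g (a, 1)).2 * y) := by
    intro g
    induction g using Coprod.induction_on with
    | inl g => intro a y; simp [hP1]
    | inr g => intro a y; simp [hP2]
    | mul g h ihg ihh =>
      intro a y
      simp only [map_mul, Equiv.Perm.mul_apply]
      rw [ihh a y, ihg _ (_ * y), ihh a 1, ihg _ (_ * 1)]
      simp [mul_assoc]
  refine ⟨fun g a => (P g (a, 1)).2, ⟨?_, ?_⟩, ?_⟩
  · intro g h a
    simp only [map_mul, Equiv.Perm.mul_apply]
    rw [hP h a 1, hP g (ρ h a) (_ * 1), mul_one]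
  · rintro (e | e)
    · simp [hP1, hf₁]
    · simp [hP2, hf₂]
  · rintro c ⟨hc, hcf⟩
    have e1 := hu₁ (fun g a => c (Coprod.inl g) a)
      ⟨fun g h a => by simpa using hc (Coprod.inl g) (Coprod.inl h) a, fun e => hcf (.inl e)⟩
    have e2 := hu₂ (fun g a => c (Coprod.inr g) a)
      ⟨fun g h a => by simpa using hc (Coprod.inr g) (Coprod.inr h) a, fun e => hcf (.inr e)⟩
    funext g
    induction g using Coprod.induction_on with
    | inl g => funext a; simpa [hP1] using congrFun (congrFun e1 g) a
    | inr g => funext a; simpa [hP2] using congrFun (congrFun e2 g) a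
    | mul g h ihg ihh =>
      funext a
      rw [hc, ihg, ihh]
      simp only [map_mul, Equiv.Perm.mul_apply]
      rw [hP h a 1, hP g (ρ h a) (_ * 1), mul_one]

open CategoryTheory in
/-- The functor attached to a cocycle. -/
def functorOf {G A : Type u} [Group G] [MulAction G A] {X : Type u} [Group X]
    (c : G → A → X) (hc : IsCoc (MulAction.toPermHom G A) c) :
    ActionCategory G A ⥤ SingleObj X where
  obj _ := ()
  map {a _} f := c f.1 a.back
  map_id a := hc.one _
  map_comp := by
    intro a b d f g
    have h2 : f.1 • a.back = b.back := f.2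
    have := hc g.1 f.1 a.back
    rw [MulAction.toPermHom_apply, MulAction.toPerm_apply, h2] at this
    exact this

open CategoryTheory in
/-- A freely generated action groupoid is a free groupoid. -/
@[reducible] def isFreeGroupoid_of_freeData {G A : Type u} [Group G] [MulAction G A] {E : Type u}
    (γ : E → G) (s : E → A)
    (h : FreeData.{u, u, u} (MulAction.toPermHom G A) γ s) :
    IsFreeGroupoid (ActionCategory G A) where
  quiverGenerators := ⟨fun a b => { e : E // s e = a.back ∧ γ e • a.back = b.back }⟩
  of := fun (e : Subtype _) => ⟨γ e.1, e.2.2⟩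
  unique_lift := by
    intro X _ f
    obtain ⟨c, ⟨hc, hcf⟩, hu⟩ := h X (fun e => @f ⟨(), s e⟩ ⟨(), γ e • s e⟩ ⟨e, rfl, rfl⟩)
    refine ⟨functorOf c hc, ?_, ?_⟩
    · rintro ⟨⟨⟩, a : A⟩ ⟨⟨⟩, b : A⟩ ⟨e, h1 : s e = a, h2 : γ e • a = b⟩
      subst h1
      subst h2
      exact hcf e
    · intro F hF
      have key := hu (fun g a => (F.map (X := (⟨(), a⟩ : ActionCategory G A))
        (Y := (⟨(), g • a⟩ : ActionCategory G A)) ⟨g, rfl⟩ : X)) ⟨?_, ?_⟩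
      · apply Functor.hext
        · intro
          apply Unit.ext
        · rintro ⟨⟨⟩, a : A⟩ ⟨⟨⟩, b : A⟩ ⟨g, h2⟩
          change G at g
          change g • a = b at h2
          subst h2
          apply heq_of_eq
          exact congrFun (congrFun key g) a
      · intro g h a
        have := F.map_comp (X := (⟨(), a⟩ : ActionCategory G A))
          (Y := (⟨(), h • a⟩ : ActionCategory G A)) (Z := (⟨(), g • h • a⟩ : ActionCategory G A))
          ⟨h, rfl⟩ ⟨g, rfl⟩
        refine Eq.trans ?_ this
        have aux : ∀ b (hb : (g * h) • a = b), (F.map (X := (⟨(), a⟩ : ActionCategory G A))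
          (Y := (⟨(), (g * h) • a⟩ : ActionCategory G A)) ⟨g * h, rfl⟩ : X) =
          (F.map (X := (⟨(), a⟩ : ActionCategory G A))
          (Y := (⟨(), b⟩ : ActionCategory G A)) ⟨g * h, hb⟩ : X) := by
          intro b hb; subst hb; rfl
        exact aux _ (mul_smul g h a)
      · intro e
        exact hF ⟨(), s e⟩ ⟨(), γ e • s e⟩ ⟨e, rfl, rfl⟩

open CategoryTheory in
lemma isFree_of_freeData {G : Type u} [Group G] (H : Subgroup G) {E : Type u}
    (γ : E → G) (s : E → G ⧸ H)
    (h : FreeData.{u, u, u} (MulAction.toPermHom G (G ⧸ H)) γ s) : IsFreeGroup H := by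
  let _ := isFreeGroupoid_of_freeData γ s h
  have i1 : MulAction.IsPretransitive G (G ⧸ H) := inferInstance
  have i2 : Nonempty (G ⧸ H) := inferInstance
  have i3 : @IsConnected (ActionCategory G (G ⧸ H)) Groupoid.toCategory :=
    @ActionCategory.instIsConnectedOfIsPretransitiveOfNonempty G _ (G ⧸ H) _ i1 i2
  have i4 := IsFreeGroupoid.endIsFreeOfConnectedFree
    (ActionCategory.objEquiv G (G ⧸ H) ((1 : G) : G ⧸ H))
  exact @IsFreeGroup.ofMulEquiv _ _ i4 _ _ (ActionCategory.endMulEquivSubgroup H)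

lemma isFree_of_injective {S : Type v} [Group S] {Z : Type w} [Group Z] [IsFreeGroup Z]
    (f : S →* Z) (hf : Function.Injective f) : IsFreeGroup S :=
  IsFreeGroup.ofMulEquiv (MonoidHom.ofInjective hf).symm

lemma stab_free {K : Type v} [Group K] {G : Type u} [Group G] {Q : Type w} [Group Q]
    (i : K →* G) (p : G →* Q) (hip : Function.Injective (p.comp i)) (C : Subgroup Q)
    [IsFreeGroup C] (a : G ⧸ C.comap p) :
    IsFreeGroup (stab ((MulAction.toPermHom G (G ⧸ C.comap p)).comp i) a) := by
  induction a using QuotientGroup.induction_on with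
  | H y =>
  have hm : ∀ g ∈ stab ((MulAction.toPermHom G (G ⧸ C.comap p)).comp i)
      (y : G ⧸ C.comap p), p (y⁻¹ * i g * y) ∈ C := by
    intro g hg
    have h1 : ((i g * y : G) : G ⧸ C.comap p) = y := hg
    have h2 := QuotientGroup.eq.1 h1.symm
    rw [← mul_assoc] at h2
    exact h2
  refine isFree_of_injective (Z := C)
    { toFun := fun g => ⟨p (y⁻¹ * i g * y), hm g.1 g.2⟩
      map_one' := by ext; simp
      map_mul' := fun g h => by ext; simp [mul_assoc] } ?_
  intro g h hgh
  have h1 : p (y⁻¹ * i g * y) = p (y⁻¹ * i h * y) := congrArg Subtype.val hgh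
  simp only [map_mul, mul_left_inj, mul_right_inj] at h1
  exact Subtype.ext (hip h1)

end PreimageFree

/-- For countable groups `G₁`, `G₂`, the canonical surjective
homomorphism `π : G₁ * G₂ → G₁ × G₂`, and an infinite cyclic subgroup `C` of
`G₁ × G₂`, the preimage `π⁻¹(C)` is a countable free group. -/
theorem preimage_infinite_cyclic_countable_free (G₁ G₂ : Type*) [Group G₁] [Group G₂]
    [Countable G₁] [Countable G₂] (C : Subgroup (G₁ × G₂))
    (hcyc : IsCyclic C) (hinf : Infinite C) :
    Countable ↥(C.comap (Coprod.toProd : Coprod G₁ G₂ →* G₁ × G₂)) ∧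
      IsFreeGroup ↥(C.comap (Coprod.toProd : Coprod G₁ G₂ →* G₁ × G₂)) := by
  constructor
  · have h0 : Countable (FreeMonoid (G₁ ⊕ G₂)) := inferInstanceAs (Countable (List (G₁ ⊕ G₂)))
    have : Countable (Coprod G₁ G₂) := (Coprod.mk_surjective (M := G₁) (N := G₂)).countable
    infer_instance
  · have : IsFreeGroup C := IsFreeGroup.ofMulEquiv
      ((FreeGroup.mulEquivIntOfUnique : FreeGroup Unit ≃* Multiplicative ℤ).trans
        (intCyclicMulEquiv (G := C)))
    obtain ⟨E₁, γ₁, s₁, h₁⟩ := PreimageFree.freeData_of_stab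
      ((MulAction.toPermHom (Coprod G₁ G₂)
        (Coprod G₁ G₂ ⧸ C.comap (Coprod.toProd : Coprod G₁ G₂ →* G₁ × G₂))).comp Coprod.inl)
      (PreimageFree.stab_free _ _ (fun a b h => by simpa using h) C)
    obtain ⟨E₂, γ₂, s₂, h₂⟩ := PreimageFree.freeData_of_stab
      ((MulAction.toPermHom (Coprod G₁ G₂)
        (Coprod G₁ G₂ ⧸ C.comap (Coprod.toProd : Coprod G₁ G₂ →* G₁ × G₂))).comp Coprod.inr)
      (PreimageFree.stab_free _ _ (fun a b h => by simpa using h) C)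
    exact PreimageFree.isFree_of_freeData _ _ _
      (PreimageFree.freeData_coprod _ γ₁ s₁ γ₂ s₂ h₁ h₂)
end

section
/- Let G₁ and G₂ be countable groups, π : G₁ * G₂ → G₁ × G₂ the canonical surjective homomorphism, and C a finite subgroup of G₁ × G₂. Then the preimage π⁻¹(C) contains a free subgroup of finite index. -/
open Monoid

namespace KerFree

variable {A B : Type*} [Group A] [Group B]

/-- index set of the free basis -/
abbrev Idx (A B : Type*) [Group A] [Group B] := {p : A × B // p.1 ≠ 1 ∧ p.2 ≠ 1}

open Classical in
/-- normalized generators -/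
noncomputable def x (a : A) (b : B) : FreeGroup (Idx A B) :=
  if h : a ≠ 1 ∧ b ≠ 1 then FreeGroup.of ⟨(a, b), h⟩ else 1

@[simp] lemma x_one_left (b : B) : x (1 : A) b = 1 := by simp [x]
@[simp] lemma x_one_right (a : A) : x a (1 : B) = 1 := by simp [x]
lemma of_eq (p : Idx A B) : FreeGroup.of p = x p.1.1 p.1.2 := by
  rw [x, dif_pos p.2]

lemma lift_x {M : Type*} [Group M] (f : A → B → M) (h1 : ∀ b, f 1 b = 1) (h2 : ∀ a, f a 1 = 1)
    (a : A) (b : B) :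
    FreeGroup.lift (fun p : Idx A B => f p.1.1 p.1.2) (x a b) = f a b := by
  by_cases ha : a = 1
  · subst ha; simp [h1]
  by_cases hb : b = 1
  · subst hb; simp [h2]
  rw [x, dif_pos ⟨ha, hb⟩, FreeGroup.lift_apply_of]

lemma hom_ext {M : Type*} [Monoid M] {f g : FreeGroup (Idx A B) →* M}
    (h : ∀ a b, f (x a b) = g (x a b)) : f = g := by
  apply FreeGroup.ext_hom
  intro p
  rw [of_eq]; exact h _ _

noncomputable def α (a : A) : FreeGroup (Idx A B) →* FreeGroup (Idx A B) :=
  FreeGroup.lift (fun p => x (a * p.1.1) p.1.2 * (x a p.1.2)⁻¹)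

noncomputable def β (b : B) : FreeGroup (Idx A B) →* FreeGroup (Idx A B) :=
  FreeGroup.lift (fun p => (x p.1.1 b)⁻¹ * x p.1.1 (b * p.1.2))

@[simp] lemma α_x (a c : A) (d : B) : α a (x c d) = x (a * c) d * (x a d)⁻¹ :=
  lift_x (fun c d => x (a * c) d * (x a d)⁻¹) (by simp) (by simp) c d

@[simp] lemma β_x (b d : B) (c : A) : β b (x c d) = (x c b)⁻¹ * x c (b * d) :=
  lift_x (fun c d => (x c b)⁻¹ * x c (b * d)) (by simp) (by simp) c d

lemma α_one : α (1 : A) = MonoidHom.id (FreeGroup (Idx A B)) := hom_ext (by simp)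
lemma β_one : β (1 : B) = MonoidHom.id (FreeGroup (Idx A B)) := hom_ext (by simp)
lemma α_mul (a c : A) : (α (a * c) : FreeGroup (Idx A B) →* _) = (α a).comp (α c) :=
  hom_ext (by simp [mul_assoc])
lemma β_mul (a c : B) : (β (a * c) : FreeGroup (Idx A B) →* _) = (β a).comp (β c) :=
  hom_ext (by simp [mul_assoc])

lemma αβ (a : A) (b : B) (f : FreeGroup (Idx A B)) :
    α a (β b f) = x a b * β b (α a f) * (x a b)⁻¹ := by
  have : (α a).comp (β b) = ((MulAut.conj (x a b)).toMonoidHom.comp ((β b).comp (α a))) :=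
    hom_ext (by intro c d; simp [mul_assoc])
  exact DFunLike.congr_fun this f

abbrev S (A B : Type*) [Group A] [Group B] := FreeGroup (Idx A B) × A × B

noncomputable def TA : A →* Function.End (S A B) where
  toFun a := fun s => (α a s.1, a * s.2.1, s.2.2)
  map_one' := by funext s; simp [α_one]; rfl
  map_mul' a c := by
    funext s
    change _ = (α a (α c s.1), a * (c * s.2.1), s.2.2)
    simp [α_mul, mul_assoc]

noncomputable def TB : B →* Function.End (S A B) where
  toFun b := fun s => (β b s.1 * (x s.2.1 b)⁻¹, s.2.1, b * s.2.2)
  map_one' := by funext s; simp [β_one]; rfl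
  map_mul' a c := by
    funext s
    change _ = (β a (β c s.1 * (x s.2.1 c)⁻¹) * (x s.2.1 a)⁻¹, s.2.1, a * (c * s.2.2))
    simp [β_mul, mul_assoc]

noncomputable def T : Coprod A B →* Function.End (S A B) := Coprod.lift TA TB

noncomputable def L : FreeGroup (Idx A B) →* Function.End (S A B) where
  toFun f := fun s => (f * s.1, s.2)
  map_one' := by funext s; simp; rfl
  map_mul' a c := by
    funext s
    change _ = (a * (c * s.1), s.2)
    simp [mul_assoc]

lemma comm_rel (a : A) (b : B) : TA a * TB b = L (x a b) * (TB b * TA a) := by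
  funext s
  change (α a (β b s.1 * (x s.2.1 b)⁻¹), a * s.2.1, b * s.2.2) =
    (x a b * (β b (α a s.1) * (x (a * s.2.1) b)⁻¹), a * s.2.1, b * s.2.2)
  simp [αβ, mul_assoc]

noncomputable def φ : FreeGroup (Idx A B) →* Coprod A B :=
  FreeGroup.lift (fun p => Coprod.inl p.1.1 * Coprod.inr p.1.2 * (Coprod.inl p.1.1)⁻¹
    * (Coprod.inr p.1.2)⁻¹)

@[simp] lemma φ_x (a : A) (b : B) : φ (x a b) =
    Coprod.inl a * Coprod.inr b * (Coprod.inl a)⁻¹ * (Coprod.inr b)⁻¹ :=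
  lift_x (fun (a : A) (b : B) => (Coprod.inl a * Coprod.inr b * (Coprod.inl a)⁻¹ *
    (Coprod.inr b)⁻¹ : Coprod A B)) (by simp) (by simp) a b

lemma Tφ : (T.comp φ : FreeGroup (Idx A B) →* _) = L := by
  apply hom_ext
  intro a b
  have h : T (Coprod.inl a * Coprod.inr b) =
      L (x a b) * T (Coprod.inr b * Coprod.inl a) := by
    simpa [T] using comm_rel a b
  calc T (φ (x a b)) = T (Coprod.inl a * Coprod.inr b) *
        T ((Coprod.inl a)⁻¹ * (Coprod.inr b)⁻¹) := by
          rw [← map_mul, φ_x]; simp only [mul_assoc]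
    _ = L (x a b) * T ((Coprod.inr b * Coprod.inl a) *
        ((Coprod.inl a)⁻¹ * (Coprod.inr b)⁻¹)) := by
          rw [h, mul_assoc, ← map_mul]
    _ = L (x a b) := by
          simp only [mul_assoc, mul_inv_cancel_left, mul_inv_cancel, map_one, mul_one]

lemma φ_inj : Function.Injective (φ : FreeGroup (Idx A B) →* Coprod A B) := by
  intro f g h
  have h2 : L f = L g := by
    rw [← Tφ]; simp [h]
  have h3 := congrArg Prod.fst (congrFun h2 ((1, 1, 1) : S A B))
  change f * 1 = g * 1 at h3
  simpa using h3

lemma φα (a : A) (f : FreeGroup (Idx A B)) :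
    φ (α a f) = Coprod.inl a * φ f * (Coprod.inl a)⁻¹ := by
  have : φ.comp (α a) = (MulAut.conj (Coprod.inl a : Coprod A B)).toMonoidHom.comp φ :=
    hom_ext (by intro c d; simp [mul_assoc])
  exact DFunLike.congr_fun this f

lemma φβ (b : B) (f : FreeGroup (Idx A B)) :
    φ (β b f) = Coprod.inr b * φ f * (Coprod.inr b)⁻¹ := by
  have : φ.comp (β b) = (MulAut.conj (Coprod.inr b : Coprod A B)).toMonoidHom.comp φ :=
    hom_ext (by intro c d; simp [mul_assoc])
  exact DFunLike.congr_fun this f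

noncomputable def Ψ (s : S A B) : Coprod A B := φ s.1 * Coprod.inl s.2.1 * Coprod.inr s.2.2

lemma Ψ_T (g : Coprod A B) : ∀ s, Ψ (T g s) = g * Ψ s := by
  induction g using Coprod.induction_on with
  | inl a =>
    intro s
    have : T (Coprod.inl a) s = (α a s.1, a * s.2.1, s.2.2) := by simp [T]; rfl
    rw [this]; simp [Ψ, φα, mul_assoc]
  | inr b =>
    intro s
    have : T (Coprod.inr b) s = (β b s.1 * (x s.2.1 b)⁻¹, s.2.1, b * s.2.2) := by
      simp [T]; rfl
    rw [this]; simp [Ψ, φβ, mul_assoc]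
  | mul g h hg hh =>
    intro s
    have : T (g * h) s = T g (T h s) := by rw [map_mul]; rfl
    rw [this, hg, hh, mul_assoc]

lemma toProd_φ (f : FreeGroup (Idx A B)) : Coprod.toProd (φ f) = 1 := by
  have : (Coprod.toProd : Coprod A B →* A × B).comp φ = 1 :=
    hom_ext (by intro c d; simp)
  exact DFunLike.congr_fun this f

lemma range_φ : (φ : FreeGroup (Idx A B) →* Coprod A B).range =
    (Coprod.toProd : Coprod A B →* A × B).ker := by
  ext g
  constructor
  · rintro ⟨f, rfl⟩
    exact toProd_φ f
  · intro hg
    have h := Ψ_T g (1, 1, 1)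
    generalize T g (1, 1, 1) = s at h
    obtain ⟨f, a, b⟩ := s
    simp only [Ψ, map_one, mul_one] at h
    have h2 := congrArg Coprod.toProd h
    rw [MonoidHom.mem_ker.1 hg, map_mul, map_mul, toProd_φ] at h2
    simp at h2
    obtain ⟨rfl, rfl⟩ := h2
    exact ⟨f, by simpa using h⟩

end KerFree

/-- For countable groups `G₁`, `G₂`, the canonical surjective
homomorphism `π : G₁ * G₂ → G₁ × G₂`, and a finite subgroup `C` of `G₁ × G₂`,
the preimage `π⁻¹(C)` contains a free subgroup of finite index. -/
theorem preimage_finite_has_free_finite_index (G₁ G₂ : Type*) [Group G₁] [Group G₂]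
    [Countable G₁] [Countable G₂] (C : Subgroup (G₁ × G₂)) (hfin : Finite C) :
    ∃ H : Subgroup ↥(C.comap (Coprod.toProd : Coprod G₁ G₂ →* G₁ × G₂)),
      IsFreeGroup ↥H ∧ H.FiniteIndex := by
  have hle : (KerFree.φ : _ →* Coprod G₁ G₂).range ≤
      C.comap (Coprod.toProd : Coprod G₁ G₂ →* G₁ × G₂) := by
    rintro _ ⟨f, rfl⟩
    rw [Subgroup.mem_comap, KerFree.toProd_φ]
    exact C.one_mem
  refine ⟨(KerFree.φ : _ →* Coprod G₁ G₂).range.subgroupOf _, ?_, ?_⟩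
  · exact IsFreeGroup.ofMulEquiv ((MonoidHom.ofInjective KerFree.φ_inj).trans
      (Subgroup.subgroupOfEquivOfLe hle).symm)
  · have : (KerFree.φ : _ →* Coprod G₁ G₂).range.subgroupOf
        (C.comap (Coprod.toProd : Coprod G₁ G₂ →* G₁ × G₂)) =
        ((Coprod.toProd : Coprod G₁ G₂ →* G₁ × G₂).subgroupComap C).ker := by
      ext g
      rw [Subgroup.mem_subgroupOf, KerFree.range_φ, MonoidHom.mem_ker, MonoidHom.mem_ker,
        Subtype.ext_iff]
      rfl
    rw [this]
    infer_instance
end
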